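/- For every κ > 0 and every t > 0, one has the exact identity μ^{ℓ,r}_t([κt, ∞)) = ( (κ^{−γ}/γ)·E[R^γ·1{R ≥ κ}] + ((2−γ)·κ^{1−γ}/((γ−1)γ))·E[R^{γ−1}·1{R ≥ κ}] ) · t^{−(γ−1)}. -/

import Mathlib

open MeasureTheory Filter Set
open scoped ENNReal NNReal Topology

noncomputable section

/-- `ℓ_t(s,u)`: the length of the interval `[s,s+u] ∩ [0,t]`. -/
def ellK (t s u : ℝ) : ℝ := max 0 (min (s + u) t - max s 0)

/-- The intensity measure `u^{-γ-1} du` on `(0,∞)`. -/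
def muU (γ : ℝ) : Measure ℝ :=
  (volume.restrict (Set.Ioi 0)).withDensity fun u => ENNReal.ofReal (u ^ (-γ - 1))

/-- The measure `μ^ℓ_t` on `(0,∞)`:
`μ^ℓ_t(A) = ∫_ℝ ∫_0^∞ 1{ℓ_t(s,u) ∈ A} u^{-γ-1} du ds`. -/
def muEll (γ t : ℝ) : Measure ℝ :=
  (Measure.map (fun p : ℝ × ℝ => ellK t p.1 p.2)
    ((volume : Measure ℝ).prod (muU γ))).restrict (Set.Ioi 0)

/-- The measure `μ^{ℓ,r}_t` on `(0,∞)`: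
`μ^{ℓ,r}_t(A) = ∫_{(0,∞)} ∫_{(0,∞)} 1{rℓ ∈ A} μ^ℓ_t(dℓ) F_R(dr)`. -/
def muEllR (γ t : ℝ) (FR : Measure ℝ) : Measure ℝ :=
  (Measure.map (fun p : ℝ × ℝ => p.1 * p.2) (FR.prod (muEll γ t))).restrict (Set.Ioi 0)

/-- The measure `ν` on `[0,1]`: density `s^{-(γ+1)} + ((2-γ)/γ)·s^{-γ}` on `(0,1)` with
respect to Lebesgue measure, together with an atom of mass `1/(γ(γ-1))` at the point `1`. -/
def nuM (γ : ℝ) : Measure ℝ :=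
  (volume.restrict (Set.Ioo 0 1)).withDensity
      (fun s => ENNReal.ofReal (s ^ (-(γ + 1)) + (2 - γ) / γ * s ^ (-γ)))
    + (Real.toNNReal (1 / (γ * (γ - 1)))) • Measure.dirac 1

instance nuM.sigmaFinite (γ : ℝ) : SigmaFinite (nuM γ) := by
  unfold nuM; infer_instance

end

theorem ellK_meas (t : ℝ) : Measurable (fun p : ℝ × ℝ => ellK t p.1 p.2) := by
  unfold ellK
  fun_prop

instance muU_sfinite (γ : ℝ) : SFinite (muU γ) := by
  unfold muU; infer_instance

instance muEll_sfinite (γ t : ℝ) : SFinite (muEll γ t) := by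
  unfold muEll; infer_instance

theorem slice_set (t a u : ℝ) (ha : 0 < a) :
    {s : ℝ | a ≤ ellK t s u} = if a ≤ u ∧ a ≤ t then Set.Icc (a - u) (t - a) else ∅ := by
  ext s
  unfold ellK
  split_ifs with h
  · simp only [mem_ofPred_eq, mem_Icc]
    constructor
    · intro h1
      rcases le_max_iff.1 h1 with h2 | h2
      · linarith
      · have := min_le_left (s+u) t
        have := min_le_right (s+u) t
        have := le_max_left s 0
        have := le_max_right s 0
        constructor <;> linarith
    · rintro ⟨h1, h2⟩
      apply le_max_of_le_right
      rcases min_cases (s+u) t with ⟨h3, _⟩ | ⟨h3, _⟩ <;>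
      rcases max_cases s 0 with ⟨h4, _⟩ | ⟨h4, _⟩ <;> rw [h3, h4] <;> linarith [h.1, h.2]
  · simp only [mem_ofPred_eq, mem_empty_iff_false, iff_false]
    intro h1
    apply h
    rcases le_max_iff.1 h1 with h2 | h2
    · linarith
    · have := min_le_left (s+u) t
      have := min_le_right (s+u) t
      have := le_max_left s 0
      have := le_max_right s 0
      constructor <;> linarith

theorem muEll_Ici (γ : ℝ) (hγ1 : 1 < γ) (t a : ℝ) (ha : 0 < a) :
    muEll γ t (Set.Ici a) = if a ≤ t then
      ENNReal.ofReal (t * a ^ (-γ) / γ + (2 - γ) * a ^ (1 - γ) / ((γ - 1) * γ)) else 0 := by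
  have hsub : Set.Ici a ∩ Set.Ioi 0 = Set.Ici a := by
    apply inter_eq_left.2
    intro x hx
    exact lt_of_lt_of_le ha hx
  have hmeas : MeasurableSet ((fun p : ℝ × ℝ => ellK t p.1 p.2) ⁻¹' Set.Ici a) :=
    ellK_meas t measurableSet_Ici
  have hd : Measurable (fun u : ℝ => ENNReal.ofReal (u ^ (-γ - 1))) := by fun_prop
  unfold muEll
  rw [Measure.restrict_apply measurableSet_Ici, hsub,
    Measure.map_apply (ellK_meas t) measurableSet_Ici, Measure.prod_apply_symm hmeas]
  have hset : ∀ u : ℝ, (fun s : ℝ => (s, u)) ⁻¹' ((fun p : ℝ × ℝ => ellK t p.1 p.2) ⁻¹' Set.Ici a)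
      = if a ≤ u ∧ a ≤ t then Set.Icc (a - u) (t - a) else ∅ := by
    intro u
    rw [← slice_set t a u ha]
    rfl
  have hm2 := measurable_measure_prodMk_right (μ := (volume : Measure ℝ)) hmeas
  simp only [hset] at hm2 ⊢
  unfold muU
  rw [lintegral_withDensity_eq_lintegral_mul _ hd hm2]
  split_ifs with hat
  · have h1 : ∀ u : ℝ, ((fun u : ℝ => ENNReal.ofReal (u ^ (-γ - 1))) * fun u : ℝ =>
        volume (if a ≤ u ∧ a ≤ t then Set.Icc (a - u) (t - a) else ∅)) u
        = (Set.Ici a).indicator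
          (fun u => ENNReal.ofReal ((t - 2 * a) * u ^ (-γ - 1) + u ^ (-γ))) u := by
      intro u
      by_cases hu : a ≤ u
      · have hu0 : 0 < u := lt_of_lt_of_le ha hu
        have : u ^ (-γ) = u ^ (-γ - 1) * u := by
          rw [← Real.rpow_add_one hu0.ne']; ring_nf
        rw [Set.indicator_of_mem (show u ∈ Set.Ici a from hu)]
        simp only [Pi.mul_apply, hu, hat, and_self, if_true, Real.volume_Icc]
        rw [← ENNReal.ofReal_mul (by positivity), this]
        congr 1; ring
      · rw [Set.indicator_of_notMem (show u ∉ Set.Ici a from hu)]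
        simp [hu]
    simp only [h1]
    rw [lintegral_indicator measurableSet_Ici, Measure.restrict_restrict measurableSet_Ici, hsub,
      setLIntegral_congr Ioi_ae_eq_Ici.symm]
    have i1 : IntegrableOn (fun u : ℝ => u ^ (-γ - 1)) (Set.Ioi a) :=
      integrableOn_Ioi_rpow_of_lt (by linarith) ha
    have i2 : IntegrableOn (fun u : ℝ => u ^ (-γ)) (Set.Ioi a) :=
      integrableOn_Ioi_rpow_of_lt (by linarith) ha
    have i3 : IntegrableOn (fun u : ℝ => (t - 2 * a) * u ^ (-γ - 1)) (Set.Ioi a) :=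
      i1.const_mul _
    have i4 : IntegrableOn (fun u : ℝ => (t - 2 * a) * u ^ (-γ - 1) + u ^ (-γ)) (Set.Ioi a) :=
      i3.add i2
    rw [← ofReal_integral_eq_lintegral_ofReal i4]
    · congr 1
      rw [integral_add i3 i2, integral_const_mul, integral_Ioi_rpow_of_lt (by linarith) ha,
        integral_Ioi_rpow_of_lt (by linarith) ha]
      have e1 : -γ - 1 + 1 = -γ := by ring
      have e2 : -γ + 1 = 1 - γ := by ring
      have e3 : a ^ (1 - γ) = a ^ (-γ) * a := by
        rw [← Real.rpow_add_one ha.ne']; ring_nf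
      rw [e1, e2, e3]
      have : γ ≠ 0 := by linarith
      have : γ - 1 ≠ 0 := by linarith
      have : 1 - γ ≠ 0 := by linarith
      have e4 : 1 - γ = -(γ - 1) := by ring
      rw [e4]
      field_simp
      ring
    · filter_upwards [ae_restrict_mem measurableSet_Ioi] with u hu
      have hu' : a < u := hu
      have hu0 : 0 < u := ha.trans hu
      have : u ^ (-γ) = u ^ (-γ - 1) * u := by
        rw [← Real.rpow_add_one hu0.ne']; ring_nf
      rw [this]
      have h5 : 0 ≤ u ^ (-γ - 1) * (t - 2 * a + u) := mul_nonneg (by positivity) (by linarith)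
      simp only [Pi.zero_apply]
      linarith
  · simp [hat]

/-- Exact identity: for `κ > 0`, `t > 0`,
`μ^{ℓ,r}_t([κt,∞)) = ((κ^{-γ}/γ)·E[R^γ 1{R ≥ κ}] + ((2-γ)κ^{1-γ}/((γ-1)γ))·E[R^{γ-1} 1{R ≥ κ}])·t^{-(γ-1)}`. -/
theorem stmt_11 (γ : ℝ) (hγ1 : 1 < γ) (hγ2 : γ < 2)
    (FR : Measure ℝ) [IsProbabilityMeasure FR] (hFRpos : FR (Set.Iic 0) = 0)
    (hmom : Integrable (fun r => r ^ γ) FR)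
    (κ : ℝ) (hκ : 0 < κ) (t : ℝ) (ht : 0 < t) :
    muEllR γ t FR (Set.Ici (κ * t))
      = ENNReal.ofReal
          ((κ ^ (-γ) / γ * (∫ r in Set.Ici κ, r ^ γ ∂FR)
            + (2 - γ) * κ ^ (1 - γ) / ((γ - 1) * γ) * (∫ r in Set.Ici κ, r ^ (γ - 1) ∂FR))
          * t ^ (-(γ - 1))) := by
  have hκt : 0 < κ * t := by positivity
  have hsub : Set.Ici (κ * t) ∩ Set.Ioi 0 = Set.Ici (κ * t) := by
    apply inter_eq_left.2
    intro x hx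
    exact lt_of_lt_of_le hκt hx
  have hmm : Measurable (fun p : ℝ × ℝ => p.1 * p.2) := by fun_prop
  unfold muEllR
  rw [Measure.restrict_apply measurableSet_Ici, hsub, Measure.map_apply hmm measurableSet_Ici,
    Measure.prod_apply (hmm measurableSet_Ici)]
  have hpos : ∀ᵐ r ∂FR, 0 < r := by
    rw [ae_iff]
    convert hFRpos using 2
    ext x; simp
  set f : ℝ → ℝ := fun r => (κ ^ (-γ) / γ * t ^ (-(γ - 1))) * r ^ γ
    + ((2 - γ) * κ ^ (1 - γ) / ((γ - 1) * γ) * t ^ (-(γ - 1))) * r ^ (γ - 1) with hf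
  have h1 : ∀ᵐ r ∂FR, muEll γ t (Prod.mk r ⁻¹' ((fun p : ℝ × ℝ => p.1 * p.2) ⁻¹' Set.Ici (κ * t)))
      = (Set.Ici κ).indicator (fun r => ENNReal.ofReal (f r)) r := by
    filter_upwards [hpos] with r hr
    have hs : Prod.mk r ⁻¹' ((fun p : ℝ × ℝ => p.1 * p.2) ⁻¹' Set.Ici (κ * t))
        = Set.Ici (κ * t / r) := by
      ext x
      simp only [mem_preimage, mem_Ici]
      rw [div_le_iff₀ hr, mul_comm x r]
    rw [hs, muEll_Ici γ hγ1 t _ (by positivity)]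
    have hc : κ * t / r ≤ t ↔ r ∈ Set.Ici κ := by
      rw [div_le_iff₀ hr, mem_Ici, mul_comm t r]
      exact mul_le_mul_iff_left₀ ht
    by_cases h : r ∈ Set.Ici κ
    · rw [if_pos (hc.2 h), Set.indicator_of_mem h]
      congr 1
      have a1 : t * (κ * t / r) ^ (-γ) = κ ^ (-γ) * t ^ (-(γ - 1)) * r ^ γ := by
        rw [Real.div_rpow hκt.le hr.le, Real.mul_rpow hκ.le ht.le, Real.rpow_neg hr.le,
          show -(γ - 1) = -γ + 1 by ring, Real.rpow_add_one ht.ne']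
        field_simp
      have a2 : (κ * t / r) ^ (1 - γ) = κ ^ (1 - γ) * t ^ (-(γ - 1)) * r ^ (γ - 1) := by
        rw [Real.div_rpow hκt.le hr.le, Real.mul_rpow hκ.le ht.le,
          show r ^ (1 - γ) = (r ^ (γ - 1))⁻¹ by rw [← Real.rpow_neg hr.le]; ring_nf,
          show -(γ - 1) = 1 - γ by ring]
        field_simp
      rw [a1, a2, hf]
      ring
    · rw [if_neg (fun h' => h (hc.1 h')), Set.indicator_of_notMem h]
  rw [lintegral_congr_ae h1, lintegral_indicator measurableSet_Ici]
  have i1 : IntegrableOn (fun r : ℝ => r ^ γ) (Set.Ici κ) FR := hmom.integrableOn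
  have i2 : IntegrableOn (fun r : ℝ => r ^ (γ - 1)) (Set.Ici κ) FR := by
    refine Integrable.mono' (i1.const_mul κ⁻¹) (by fun_prop) ?_
    filter_upwards [ae_restrict_mem measurableSet_Ici] with r hr
    have hr' : κ ≤ r := hr
    have hr0 : 0 < r := lt_of_lt_of_le hκ hr'
    rw [Real.norm_of_nonneg (by positivity), Real.rpow_sub_one hr0.ne', div_eq_inv_mul]
    gcongr
  have i4 : IntegrableOn f (Set.Ici κ) FR := (i1.const_mul _).add (i2.const_mul _)
  rw [← ofReal_integral_eq_lintegral_ofReal i4]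
  · congr 1
    rw [hf, integral_add (i1.const_mul _) (i2.const_mul _), integral_const_mul, integral_const_mul]
    ring
  · filter_upwards [ae_restrict_mem measurableSet_Ici] with r hr
    have hr' : κ ≤ r := hr
    have hr0 : 0 < r := lt_of_lt_of_le hκ hr'
    have b1 : 0 < γ - 1 := by linarith
    have b2 : 0 < 2 - γ := by linarith
    have b3 : 0 < γ := by linarith
    simp only [Pi.zero_apply, hf]
    positivity
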